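/- Under Assumptions 1.1, 1.2 and 1.3, there exists a random variable Ĉ₆ with 1 ≤ Ĉ₆ < ∞ everywhere such that, almost surely on Λ, for every real ε > 0: liminf_{n→∞} γ_n^{p̂} u(θ_n) ≤ Ĉ₆ (φ_ε(ξ))^{μ̂}. -/

import Mathlib

open MeasureTheory Filter

open scoped NNReal Topology

/-!
Fix a bounded trajectory with iterates `x n` and noise `z n`, and write `γ n` for the elapsed
time and `u n = f (x n) - f̂`. Over a window of elapsed time about `t`, with `t` small compared
to `1 / L` where `L` is a Lipschitz constant of `∇f`, the descent lemma gives
`u k ≤ u n - t / 4 * ‖∇f (x n)‖ ^ 2 + 9 / t * e ^ 2`, where `e` bounds the accumulated noise.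
Since the sums of `α i γ i ^ r z i` over windows are asymptotically at most `Ξ + ε`, with `Ξ`
their upper limit, Abel summation yields `e ≤ γ n ^ (-r) * (Ξ + ε)`. The Łojasiewicz inequality
near the accumulation points bounds `‖∇f (x n)‖ ^ 2` below by a multiple of `|u n| ^ (2 / μ)`.

Suppose now that `γ n ^ p * u n > c` for all large `n`. Then the noise is absorbed by half of
the descent, and each window decreases `u` by at least `η t u ^ (1 + q)`, with `1 + q = 2 / μ`
if `μ < 2` and any small `q > 0` if `μ = 2`. Hence `u ^ (-q)` grows at least linearly in the
elapsed time, at rate `q η`, while `u ^ (-q) < c ^ (-q) * γ ^ (p q)`. This is absurd when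
`p q < 1`, and also when `p q = 1` and `c` is large; the size of `c` needed depends on the noise
only through the factor `(φ(Ξ) + ε) ^ μ`.
-/

section RealSequences

variable {c p q η t : ℝ}

-- Discrete form of: if `du/dt ≤ -η u ^ (1 + q)`, then `d(u ^ (-q))/dt ≥ q η`.
lemma rpow_neg_add_le_rpow_neg {u v : ℝ} (hu : 0 < u) (hv : 0 < v) (hq : 0 ≤ q)
    (h : v ≤ u - η * u ^ (1 + q)) : u ^ (-q) + q * η ≤ v ^ (-q) := by
  have hv_exp : v ≤ u * Real.exp (-(η * u ^ q)) := calc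
    v ≤ u * (1 - η * u ^ q) := h.trans_eq (by rw [Real.rpow_add hu, Real.rpow_one]; ring)
    _ ≤ u * Real.exp (-(η * u ^ q)) := by gcongr; exact Real.one_sub_le_exp_neg _
  have hcancel : u ^ (-q) * u ^ q = 1 := by rw [← Real.rpow_add hu]; simp
  calc u ^ (-q) + q * η = u ^ (-q) * (-(η * u ^ q) * -q + 1) := by
        linear_combination -q * η * hcancel
    _ ≤ u ^ (-q) * Real.exp (-(η * u ^ q) * -q) := by gcongr; exact Real.add_one_le_exp _
    _ = (u * Real.exp (-(η * u ^ q))) ^ (-q) := by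
        rw [Real.mul_rpow hu.le (Real.exp_pos _).le, ← Real.exp_mul]
    _ ≤ v ^ (-q) := Real.rpow_le_rpow_of_nonpos hv hv_exp (neg_nonpos.2 hq)

lemma mul_natCast_le_rpow_neg {U : ℕ → ℝ} (hU : ∀ j, 0 < U j) (hq : 0 ≤ q)
    (h : ∀ j, U (j + 1) ≤ U j - η * U j ^ (1 + q)) (j : ℕ) : q * η * j ≤ U j ^ (-q) := by
  induction j with
  | zero => simpa using Real.rpow_nonneg (hU 0).le _
  | succ j ih =>
    push_cast
    linarith [rpow_neg_add_le_rpow_neg (hU j) (hU (j + 1)) hq (h j)]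

lemma exists_natCast_mul_rpow_lt {a b κ s : ℝ} (hb : 0 < b) (ht : 0 < t)
    (h : κ < 1 ∨ κ = 1 ∧ a < b) : ∃ j : ℕ, a * (s + t * j) ^ κ < b * (t * j) := by
  obtain ⟨a', ha', hle⟩ : ∃ a' < b, ∀ᶠ y : ℝ in atTop, a * y ^ κ ≤ a' * y := by
    rcases h with hκ | ⟨rfl, hab⟩
    · have hlim : Tendsto (fun y : ℝ => a * y ^ (-(1 - κ))) atTop (𝓝 (a * 0)) :=
        (tendsto_rpow_neg_atTop (sub_pos.2 hκ)).const_mul a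
      rw [mul_zero] at hlim
      refine ⟨b / 2, half_lt_self hb, ?_⟩
      filter_upwards [hlim.eventually_le_const (half_pos hb), eventually_gt_atTop 0] with y hy hy0
      calc a * y ^ κ = a * y ^ (-(1 - κ)) * y := by
            rw [mul_assoc, ← Real.rpow_add_one hy0.ne']; ring_nf
        _ ≤ b / 2 * y := by gcongr
    · exact ⟨a, hab, by simp⟩
  have hy : Tendsto (fun j : ℕ => t * (j : ℝ)) atTop atTop :=
    tendsto_natCast_atTop_atTop.const_mul_atTop ht
  have hgap : Tendsto (fun j : ℕ => (b - a') * (t * j)) atTop atTop :=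
    hy.const_mul_atTop (sub_pos.2 ha')
  obtain ⟨j, hj, hj'⟩ := (((tendsto_atTop_add_const_left _ s hy).eventually hle).and
    (hgap.eventually_gt_atTop (a' * s))).exists
  exact ⟨j, by linarith⟩

lemma exists_lt_mul_rpow_neg {U τ : ℕ → ℝ} (hc : 0 < c) (hp : 0 ≤ p) (hq : 0 < q) (hη : 0 < η)
    (ht : 0 < t) (hU : ∀ j, U (j + 1) ≤ U j - η * t * U j ^ (1 + q)) (hτ0 : ∀ j, 0 < τ j)
    (hτ : ∀ j, τ (j + 1) ≤ τ j + t) (hpq : p * q < 1 ∨ p * q = 1 ∧ c ^ (-q) < q * η) :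
    ∃ j, U j < c * τ j ^ (-p) := by
  by_contra! hlow
  have hpow (j : ℕ) : 0 < τ j ^ (-p) := Real.rpow_pos_of_pos (hτ0 j) _
  have hτ_le (j : ℕ) : τ j ≤ τ 0 + t * j := by
    induction j with
    | zero => simp
    | succ j ih => push_cast; linarith [hτ j]
  obtain ⟨j, hj⟩ := exists_natCast_mul_rpow_lt (s := τ 0) (mul_pos hq hη) ht hpq
  refine hj.not_ge ?_
  calc q * η * (t * j) = q * (η * t) * j := by ring
    _ ≤ U j ^ (-q) :=
        mul_natCast_le_rpow_neg (fun j => (mul_pos hc (hpow j)).trans_le (hlow j)) hq.le hU j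
    _ ≤ (c * τ j ^ (-p)) ^ (-q) :=
        Real.rpow_le_rpow_of_nonpos (mul_pos hc (hpow j)) (hlow j) (by linarith)
    _ = c ^ (-q) * τ j ^ (p * q) := by
        rw [Real.mul_rpow hc.le (hpow j).le, ← Real.rpow_mul (hτ0 j).le, neg_mul_neg]
    _ ≤ c ^ (-q) * (τ 0 + t * j) ^ (p * q) := by
        have := (hτ0 j).le
        gcongr
        exact hτ_le j

lemma frequently_rpow_mul_le_of_exists_decrease {u γ : ℕ → ℝ} {δ : ℝ} (hc : 0 < c) (hp : 0 ≤ p)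
    (hq : 0 < q) (hη : 0 < η) (ht : 0 < t) (hγ : Tendsto γ atTop atTop)
    (hfreq : ∃ᶠ n in atTop, u n ≤ δ)
    (hdecr : ∀ᶠ n in atTop, c * γ n ^ (-p) < u n → u n ≤ δ →
      ∃ k ≥ n, γ k ≤ γ n + t ∧ u k ≤ u n - η * t * u n ^ (1 + q))
    (hpq : p * q < 1 ∨ p * q = 1 ∧ c ^ (-q) < q * η) :
    ∃ᶠ n in atTop, γ n ^ p * u n ≤ c := by
  by_contra hcon
  obtain ⟨N, hN⟩ := eventually_atTop.1
    ((not_frequently.1 hcon).and ((hγ.eventually_gt_atTop 0).and hdecr))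
  have hlow (n : ℕ) (hn : N ≤ n) : c * γ n ^ (-p) < u n := by
    obtain ⟨hcn, hγn, -⟩ := hN n hn
    rw [Real.rpow_neg hγn.le, ← div_eq_mul_inv, div_lt_iff₀' (Real.rpow_pos_of_pos hγn _)]
    exact not_le.1 hcn
  have hstep (n : {n // N ≤ n ∧ u n ≤ δ}) : ∃ k : {n // N ≤ n ∧ u n ≤ δ},
      γ k ≤ γ n + t ∧ u k ≤ u n - η * t * u n ^ (1 + q) := by
    obtain ⟨n, hn, hδ⟩ := n
    obtain ⟨k, hk, hγk, huk⟩ := (hN n hn).2.2 (hlow n hn) hδ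
    have hu : 0 < u n := (mul_pos hc (Real.rpow_pos_of_pos (hN n hn).2.1 _)).trans (hlow n hn)
    have hdrop : 0 ≤ η * t * u n ^ (1 + q) := by positivity
    exact ⟨⟨k, hn.trans hk, by linarith⟩, hγk, huk⟩
  choose next hγ_next hu_next using hstep
  obtain ⟨n₀, hδ, hn₀⟩ := (hfreq.and_eventually (eventually_ge_atTop N)).exists
  let s (j : ℕ) := next^[j] ⟨n₀, hn₀, hδ⟩
  have hs (j : ℕ) : s (j + 1) = next (s j) := Function.iterate_succ_apply' _ _ _
  obtain ⟨j, hj⟩ := exists_lt_mul_rpow_neg (U := fun j => u (s j)) (τ := fun j => γ (s j))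
    hc hp hq hη ht (fun j => by simpa only [hs] using hu_next (s j))
    (fun j => (hN _ (s j).2.1).2.1) (fun j => by simpa only [hs] using hγ_next (s j)) hpq
  exact lt_asymm hj (hlow _ (s j).2.1)

lemma eventually_mul_rpow_neg_sq_le {K B r s : ℝ} (hη : 0 < η) (hc : 0 < c)
    (h : p * s < 2 * r ∨ p * s ≤ 2 * r ∧ K * B ^ 2 ≤ η * c ^ s) :
    ∀ᶠ g : ℝ in atTop, K * (g ^ (-r) * B) ^ 2 ≤ η * (c * g ^ (-p)) ^ s := by
  have hcs : 0 < η * c ^ s := by positivity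
  have hratio : ∀ᶠ g : ℝ in atTop, K * B ^ 2 ≤ η * c ^ s * g ^ (2 * r - p * s) := by
    rcases h with hlt | ⟨hle, hKB⟩
    · exact ((tendsto_rpow_atTop (sub_pos.2 hlt)).const_mul_atTop hcs).eventually_ge_atTop _
    · filter_upwards [eventually_ge_atTop 1] with g hg
      exact hKB.trans (le_mul_of_one_le_right hcs.le (Real.one_le_rpow hg (sub_nonneg.2 hle)))
  filter_upwards [hratio, eventually_gt_atTop 0] with g hg hg0
  calc K * (g ^ (-r) * B) ^ 2 = K * B ^ 2 * g ^ (-(2 * r)) := by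
        rw [mul_pow, ← Real.rpow_mul_natCast hg0.le]; ring_nf
    _ ≤ η * c ^ s * g ^ (2 * r - p * s) * g ^ (-(2 * r)) := by gcongr
    _ = η * (c * g ^ (-p)) ^ s := by
        rw [Real.mul_rpow hc.le (by positivity), ← Real.rpow_mul hg0.le, mul_assoc (η * c ^ s),
          ← Real.rpow_add hg0]
        ring_nf

lemma exists_one_le_and_le_mul_rpow_and_rpow_neg_lt {K a b s : ℝ} (ha : 0 < a) (hb : 0 < b)
    (hs : 0 < s) (hq : 0 < q) : ∃ C : ℝ, 1 ≤ C ∧ K ≤ a * C ^ s ∧ C ^ (-q) < b :=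
  ((eventually_ge_atTop 1).and
    ((((tendsto_rpow_atTop hs).const_mul_atTop ha).eventually_ge_atTop K).and
      ((tendsto_rpow_neg_atTop hq).eventually_lt_const hb))).exists

end RealSequences

lemma le_add_inner_gradient_add_sq {E : Type*} [NormedAddCommGroup E] [InnerProductSpace ℝ E]
    [CompleteSpace E] {f : E → ℝ} {S : Set E} {L : ℝ≥0} (hS : Convex ℝ S)
    (hf : ∀ y ∈ S, DifferentiableAt ℝ f y) (hL : LipschitzOnWith L (gradient f) S)
    {x y : E} (hx : x ∈ S) (hy : y ∈ S) :
    f y ≤ f x + inner ℝ (gradient f x) (y - x) + L / 2 * ‖y - x‖ ^ 2 := by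
  set v := y - x with hv
  have hmem : ∀ s ∈ Set.Icc (0 : ℝ) 1, x + s • v ∈ S := fun s hs => hS.add_smul_sub_mem hx hy hs
  have hderiv : ∀ s ∈ Set.Icc (0 : ℝ) 1, HasDerivAt (fun s : ℝ => f (x + s • v))
      (inner ℝ (gradient f (x + s • v)) v) s := fun s hs => by
    have hline : HasDerivAt (fun s : ℝ => x + s • v) v s := by
      simpa using ((hasDerivAt_id s).smul_const v).const_add x
    exact ((hf _ (hmem s hs)).hasGradientAt.hasFDerivAt.comp_hasDerivAt s hline).congr_deriv
      (InnerProductSpace.toDual_apply_apply ..)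
  have hmajorant (s : ℝ) : HasDerivAt
      (fun s : ℝ => f x + inner ℝ (gradient f x) v * s + L / 2 * ‖v‖ ^ 2 * s ^ 2)
      (inner ℝ (gradient f x) v + L * s * ‖v‖ ^ 2) s := by
    refine ((((hasDerivAt_id s).const_mul (inner ℝ (gradient f x) v)).const_add (f x)).add
      ((hasDerivAt_pow 2 s).const_mul (L / 2 * ‖v‖ ^ 2))).congr_deriv ?_
    norm_num
    ring
  have hbound : ∀ s ∈ Set.Ico (0 : ℝ) 1,
      inner ℝ (gradient f (x + s • v)) v ≤ inner ℝ (gradient f x) v + L * s * ‖v‖ ^ 2 := by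
    intro s hs
    rw [← sub_le_iff_le_add', ← inner_sub_left]
    calc inner ℝ (gradient f (x + s • v) - gradient f x) v
        ≤ ‖gradient f (x + s • v) - gradient f x‖ * ‖v‖ := real_inner_le_norm _ _
      _ ≤ L * ‖x + s • v - x‖ * ‖v‖ := by
          gcongr
          exact hL.norm_sub_le (hmem s (Set.Ico_subset_Icc_self hs)) hx
      _ = L * s * ‖v‖ ^ 2 := by
          rw [add_sub_cancel_left, norm_smul, Real.norm_of_nonneg hs.1]; ring
  have hfinal := image_le_of_deriv_right_le_deriv_boundary
    (fun s hs => (hderiv s hs).continuousAt.continuousWithinAt)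
    (fun s hs => (hderiv s (Set.Ico_subset_Icc_self hs)).hasDerivWithinAt) (by simp)
    (fun s _ => (hmajorant s).continuousAt.continuousWithinAt)
    (fun s _ => (hmajorant s).hasDerivWithinAt) hbound (Set.right_mem_Icc.2 zero_le_one)
  simpa [hv] using hfinal

section NormedSpace

variable {E : Type*} [NormedAddCommGroup E] [NormedSpace ℝ E]

lemma norm_sum_smul_le_sum_mul {ι : Type*} {s : Finset ι} {w : ι → ℝ} {y : ι → E} {C : ℝ}
    (hw : ∀ i ∈ s, 0 ≤ w i) (hy : ∀ i ∈ s, ‖y i‖ ≤ C) :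
    ‖∑ i ∈ s, w i • y i‖ ≤ (∑ i ∈ s, w i) * C := by
  rw [Finset.sum_mul]
  refine norm_sum_le_of_le _ fun i hi => ?_
  rw [norm_smul, Real.norm_of_nonneg (hw i hi)]
  exact mul_le_mul_of_nonneg_left (hy i hi) (hw i hi)

lemma norm_sum_Ico_smul_le_of_antitoneOn {w : ℕ → ℝ} {y : ℕ → E} {n m : ℕ} {B : ℝ} (hnm : n ≤ m)
    (hw : AntitoneOn w (Set.Icc n m)) (hwm : 0 ≤ w m)
    (hB : ∀ j ∈ Set.Icc n m, ‖∑ i ∈ Finset.Ico n j, y i‖ ≤ B) :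
    ‖∑ i ∈ Finset.Ico n m, w i • y i‖ ≤ w n * B := by
  have habel : ∀ j, n ≤ j → j ≤ m →
      ‖∑ i ∈ Finset.Ico n j, w i • y i - w j • ∑ i ∈ Finset.Ico n j, y i‖ ≤ (w n - w j) * B := by
    intro j hj
    induction j, hj using Nat.le_induction with
    | base => simp
    | succ j hj ih =>
      intro hjm
      have hanti : 0 ≤ w j - w (j + 1) :=
        sub_nonneg.2 (hw ⟨hj, by lia⟩ ⟨by lia, hjm⟩ j.le_succ)
      calc _ = ‖(∑ i ∈ Finset.Ico n j, w i • y i - w j • ∑ i ∈ Finset.Ico n j, y i)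
            + (w j - w (j + 1)) • ∑ i ∈ Finset.Ico n (j + 1), y i‖ := by
              rw [Finset.sum_Ico_succ_top hj, Finset.sum_Ico_succ_top hj]
              congr 1
              module
        _ ≤ (w n - w j) * B + (w j - w (j + 1)) * B := by
              refine norm_add_le_of_le (ih (by lia)) ?_
              rw [norm_smul, Real.norm_of_nonneg hanti]
              gcongr
              exact hB _ ⟨by lia, hjm⟩
        _ = (w n - w (j + 1)) * B := by ring
  calc ‖∑ i ∈ Finset.Ico n m, w i • y i‖
      = ‖(∑ i ∈ Finset.Ico n m, w i • y i - w m • ∑ i ∈ Finset.Ico n m, y i)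
          + w m • ∑ i ∈ Finset.Ico n m, y i‖ := by rw [sub_add_cancel]
    _ ≤ (w n - w m) * B + w m * B := by
        refine norm_add_le_of_le (habel m hnm le_rfl) ?_
        rw [norm_smul, Real.norm_of_nonneg hwm]
        gcongr
        exact hB m ⟨hnm, le_rfl⟩
    _ = w n * B := by ring

lemma norm_sum_Ico_smul_le_rpow_neg_mul {α γ : ℕ → ℝ} {z : ℕ → E} {n m : ℕ} {r B : ℝ}
    (hnm : n ≤ m) (hr : 0 ≤ r) (hγ : Monotone γ) (hγn : 0 < γ n)
    (hB : ∀ j ∈ Set.Icc n m, ‖∑ i ∈ Finset.Ico n j, (α i * γ i ^ r) • z i‖ ≤ B) :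
    ‖∑ i ∈ Finset.Ico n m, α i • z i‖ ≤ γ n ^ (-r) * B := by
  have hpos (i : ℕ) (hi : n ≤ i) : 0 < γ i := hγn.trans_le (hγ hi)
  have hunweight : ∑ i ∈ Finset.Ico n m, α i • z i
      = ∑ i ∈ Finset.Ico n m, γ i ^ (-r) • (α i * γ i ^ r) • z i := by
    refine Finset.sum_congr rfl fun i hi => ?_
    have hi := hpos i (Finset.mem_Ico.1 hi).1
    rw [smul_smul, mul_left_comm, ← Real.rpow_add hi, neg_add_cancel, Real.rpow_zero, mul_one]
  rw [hunweight]
  refine norm_sum_Ico_smul_le_of_antitoneOn hnm (fun i hi j _ hij => ?_)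
    (Real.rpow_nonneg (hpos m hnm).le _) hB
  exact Real.rpow_le_rpow_of_nonpos (hpos i hi.1) (hγ hij) (neg_nonpos.2 hr)

lemma sub_eq_neg_sum_sub_sum_of_succ {α : ℕ → ℝ} {x g z : ℕ → E}
    (hx : ∀ n, x (n + 1) = x n - α n • (g n + z n)) {n k : ℕ} (hnk : n ≤ k) :
    x k - x n = -∑ i ∈ Finset.Ico n k, α i • g i - ∑ i ∈ Finset.Ico n k, α i • z i := by
  have hstep (i : ℕ) : x (i + 1) - x i = -(α i • g i) - α i • z i := by rw [hx]; module
  rw [← Finset.sum_Ico_sub x hnk]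
  simp only [hstep, Finset.sum_sub_distrib, Finset.sum_neg_distrib]

lemma norm_sub_le_of_succ_of_lipschitzOnWith {S : Set E} {L : ℝ≥0} {g : E → E} {α : ℕ → ℝ}
    {x z : ℕ → E} (hg : LipschitzOnWith L g S) (hα : ∀ n, 0 ≤ α n) (hxS : ∀ n, x n ∈ S)
    (hx : ∀ n, x (n + 1) = x n - α n • (g (x n) + z n)) {n k : ℕ} {t e : ℝ} (htL : t * L ≤ 1 / 2)
    (ht : ∑ i ∈ Finset.Ico n k, α i ≤ t)
    (hz : ∀ j ∈ Set.Icc n k, ‖∑ i ∈ Finset.Ico n j, α i • z i‖ ≤ e) :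
    ∀ j ∈ Set.Icc n k, ‖x j - x n‖ ≤ 2 * (t * ‖g (x n)‖ + e) := by
  set D := 2 * (t * ‖g (x n)‖ + e) with hD
  intro j
  induction j using Nat.strong_induction_on with
  | _ j ih =>
    intro hj
    have he : 0 ≤ e := (norm_nonneg _).trans (hz j hj)
    have ht0 : 0 ≤ t := (Finset.sum_nonneg fun i _ => hα i).trans ht
    have hsum : ∑ i ∈ Finset.Ico n j, α i ≤ t :=
      (Finset.sum_le_sum_of_subset_of_nonneg (Finset.Ico_subset_Ico_right hj.2)
        fun i _ _ => hα i).trans ht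
    have hgi : ∀ i ∈ Finset.Ico n j, ‖g (x i)‖ ≤ ‖g (x n)‖ + L * D := by
      intro i hi
      rw [Finset.mem_Ico] at hi
      calc ‖g (x i)‖ ≤ ‖g (x n)‖ + ‖g (x i) - g (x n)‖ := norm_le_norm_add_norm_sub' _ _
        _ ≤ ‖g (x n)‖ + L * ‖x i - x n‖ := by gcongr; exact hg.norm_sub_le (hxS i) (hxS n)
        _ ≤ ‖g (x n)‖ + L * D := by gcongr; exact ih i hi.2 ⟨hi.1, hi.2.le.trans hj.2⟩
    rw [sub_eq_neg_sum_sub_sum_of_succ hx hj.1]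
    calc _ ≤ ‖∑ i ∈ Finset.Ico n j, α i • g (x i)‖ + ‖∑ i ∈ Finset.Ico n j, α i • z i‖ :=
          (norm_sub_le _ _).trans_eq (by rw [norm_neg])
      _ ≤ (∑ i ∈ Finset.Ico n j, α i) * (‖g (x n)‖ + L * D) + e :=
          add_le_add (norm_sum_smul_le_sum_mul (fun i _ => hα i) hgi) (hz j hj)
      _ ≤ t * (‖g (x n)‖ + L * D) + e := by gcongr
      _ = D / 2 + t * L * D := by rw [hD]; ring
      _ ≤ D / 2 + 1 / 2 * D := by gcongr
      _ = D := by ring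

end NormedSpace

/-- The time `γ n = ∑_{i < n} α i` elapsed before step `n`, for step sizes `α`. -/
def elapsed (α : ℕ → ℝ) (n : ℕ) : ℝ := ∑ i ∈ Finset.range n, α i

/-- The weighted noise `α i γ_i ^ r z i` of Assumption 1.2, where `γ = elapsed α`. -/
noncomputable def scaledNoise {E : Type*} [SMul ℝ E] (α : ℕ → ℝ) (r : ℝ) (z : ℕ → E) (i : ℕ) : E :=
  (α i * elapsed α i ^ r) • z i

section Elapsed

variable {α : ℕ → ℝ}

lemma sum_Ico_eq_elapsed_sub {n k : ℕ} (hnk : n ≤ k) :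
    ∑ i ∈ Finset.Ico n k, α i = elapsed α k - elapsed α n :=
  Finset.sum_Ico_eq_sub _ hnk

lemma elapsed_monotone (hα : ∀ n, 0 ≤ α n) : Monotone (elapsed α) :=
  fun _ _ hnk => sub_nonneg.1 (sum_Ico_eq_elapsed_sub hnk ▸ Finset.sum_nonneg fun i _ => hα i)

lemma eventually_exists_elapsed_sub_mem_Icc (hα : Tendsto α atTop (𝓝 0))
    (hγ : Tendsto (elapsed α) atTop atTop) {t : ℝ} (ht : 0 < t) :
    ∀ᶠ n in atTop, ∃ k ≥ n, elapsed α k - elapsed α n ∈ Set.Icc (t / 2) t := by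
  filter_upwards [eventually_forall_ge_atTop.2 (hα.eventually_le_const (half_pos ht))] with n hn
  have hex : ∃ m, t / 2 ≤ elapsed α (n + m) - elapsed α n :=
    ((tendsto_add_atTop_iff_nat n).2 hγ |>.eventually_ge_atTop (elapsed α n + t / 2)).exists.imp
      fun m hm => by rw [add_comm n m]; linarith
  classical
  refine ⟨n + Nat.find hex, Nat.le_add_right _ _, Nat.find_spec hex, ?_⟩
  obtain ⟨m, hm⟩ : ∃ m, Nat.find hex = m + 1 :=
    Nat.exists_eq_succ_of_ne_zero fun h0 => by
      have := Nat.find_spec hex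
      rw [h0, add_zero, sub_self] at this
      linarith
  have hlt := not_le.1 (Nat.find_min hex (m := m) (by lia))
  have hsucc : elapsed α (n + (m + 1)) = elapsed α (n + m) + α (n + m) :=
    Finset.sum_range_succ _ _
  rw [hm, hsucc]
  linarith [hn (n + m) (Nat.le_add_right n m)]

end Elapsed

/-- The iterates `x` of gradient descent on `f` with step sizes `α` and gradient errors `z`, staying
in a convex set `S` on which `∇f` is `L`-Lipschitz. -/
structure PerturbedGradientDescent {E : Type*} [NormedAddCommGroup E] [InnerProductSpace ℝ E]
    [CompleteSpace E] (f : E → ℝ) (S : Set E) (L : ℝ≥0) (α : ℕ → ℝ) (x z : ℕ → E) : Prop where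
  convex : Convex ℝ S
  differentiableAt : ∀ y ∈ S, DifferentiableAt ℝ f y
  lipschitzOnWith : LipschitzOnWith L (gradient f) S
  step_pos : ∀ n, 0 < α n
  mem : ∀ n, x n ∈ S
  succ : ∀ n, x (n + 1) = x n - α n • (gradient f (x n) + z n)

namespace PerturbedGradientDescent

variable {E : Type*} [NormedAddCommGroup E] [InnerProductSpace ℝ E] [CompleteSpace E]
  {f : E → ℝ} {S : Set E} {L : ℝ≥0} {α : ℕ → ℝ} {x z : ℕ → E} {n k : ℕ} {t e r B : ℝ}

lemma norm_sum_smul_gradient_sub_le (h : PerturbedGradientDescent f S L α x z)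
    (hnk : n ≤ k) (htL : t * L ≤ 1 / 2) (ht : ∑ i ∈ Finset.Ico n k, α i ≤ t)
    (hz : ∀ j ∈ Set.Icc n k, ‖∑ i ∈ Finset.Ico n j, α i • z i‖ ≤ e) :
    ‖∑ i ∈ Finset.Ico n k, α i • (gradient f (x i) - gradient f (x n))‖ ≤
      t * (L * (2 * (t * ‖gradient f (x n)‖ + e))) := by
  have hdisp := norm_sub_le_of_succ_of_lipschitzOnWith h.lipschitzOnWith
    (fun i => (h.step_pos i).le) h.mem h.succ htL ht hz
  have hincr : ∀ i ∈ Finset.Ico n k, ‖gradient f (x i) - gradient f (x n)‖ ≤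
      L * (2 * (t * ‖gradient f (x n)‖ + e)) := by
    intro i hi
    rw [Finset.mem_Ico] at hi
    refine (h.lipschitzOnWith.norm_sub_le (h.mem i) (h.mem n)).trans ?_
    gcongr
    exact hdisp i ⟨hi.1, hi.2.le⟩
  have he : 0 ≤ e := (norm_nonneg _).trans (hz n ⟨le_rfl, hnk⟩)
  have ht0 : 0 ≤ t := (Finset.sum_nonneg fun i _ => (h.step_pos i).le).trans ht
  refine (norm_sum_smul_le_sum_mul (fun i _ => (h.step_pos i).le) hincr).trans ?_
  gcongr

lemma inner_gradient_sub_le (h : PerturbedGradientDescent f S L α x z) (hnk : n ≤ k)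
    (htL : t * L ≤ 1 / 2) (hsum : ∑ i ∈ Finset.Ico n k, α i ∈ Set.Icc (t / 2) t)
    (hz : ∀ j ∈ Set.Icc n k, ‖∑ i ∈ Finset.Ico n j, α i • z i‖ ≤ e) :
    inner ℝ (gradient f (x n)) (x k - x n) ≤ -(t / 2 * ‖gradient f (x n)‖ ^ 2) +
      ‖gradient f (x n)‖ * (t * (L * (2 * (t * ‖gradient f (x n)‖ + e))) + e) := by
  set g := gradient f (x n)
  set s := ∑ i ∈ Finset.Ico n k, α i with hs
  set w := ∑ i ∈ Finset.Ico n k, α i • (gradient f (x i) - g) + ∑ i ∈ Finset.Ico n k, α i • z i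
    with hw
  have hsplit : x k - x n = -(s • g) - w := by
    rw [sub_eq_neg_sum_sub_sum_of_succ (fun n => h.succ n) hnk, hw, hs, Finset.sum_smul]
    simp only [smul_sub, Finset.sum_sub_distrib]
    module
  calc inner ℝ g (x k - x n) = -(s * ‖g‖ ^ 2) - inner ℝ g w := by
        rw [hsplit, inner_sub_right, inner_neg_right, real_inner_smul_right,
          real_inner_self_eq_norm_sq]
    _ ≤ -(s * ‖g‖ ^ 2) + ‖g‖ * ‖w‖ := by
        linarith [neg_le_of_abs_le (abs_real_inner_le_norm g w)]
    _ ≤ -(t / 2 * ‖g‖ ^ 2) + ‖g‖ * (t * (L * (2 * (t * ‖g‖ + e))) + e) := by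
        gcongr
        · exact hsum.1
        · exact norm_add_le_of_le (h.norm_sum_smul_gradient_sub_le hnk htL hsum.2 hz)
            (hz k ⟨hnk, le_rfl⟩)

lemma apply_le_sub_add (h : PerturbedGradientDescent f S L α x z) (hnk : n ≤ k) (ht : 0 < t)
    (htL : t * L ≤ 1 / 48) (hsum : ∑ i ∈ Finset.Ico n k, α i ∈ Set.Icc (t / 2) t)
    (hz : ∀ j ∈ Set.Icc n k, ‖∑ i ∈ Finset.Ico n j, α i • z i‖ ≤ e) :
    f (x k) ≤ f (x n) - t / 4 * ‖gradient f (x n)‖ ^ 2 + 9 / t * e ^ 2 := by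
  have htL' : t * L ≤ 1 / 2 := htL.trans (by norm_num)
  have hinner := h.inner_gradient_sub_le hnk htL' hsum hz
  have hdisp := norm_sub_le_of_succ_of_lipschitzOnWith h.lipschitzOnWith
    (fun i => (h.step_pos i).le) h.mem h.succ htL' hsum.2 hz k ⟨hnk, le_rfl⟩
  have hdescent := le_add_inner_gradient_add_sq h.convex h.differentiableAt h.lipschitzOnWith
    (h.mem n) (h.mem k)
  have he : 0 ≤ e := (norm_nonneg _).trans (hz k ⟨hnk, le_rfl⟩)
  set G := ‖gradient f (x n)‖
  have hquad : L / 2 * ‖x k - x n‖ ^ 2 ≤ 4 * (t * L) * (t * G ^ 2 + e ^ 2 / t) := calc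
    L / 2 * ‖x k - x n‖ ^ 2 ≤ L / 2 * (2 * (t * G + e)) ^ 2 := by gcongr
    _ = 2 * L * (t * G + e) ^ 2 := by ring
    _ ≤ 2 * L * (2 * ((t * G) ^ 2 + e ^ 2)) := by gcongr; exact add_sq_le
    _ = 4 * (t * L) * (t * G ^ 2 + e ^ 2 / t) := by field_simp; ring
  -- The weight in Young's inequality keeps the total coefficient of `G ^ 2` below `-t / 4`.
  have hyoung : G * e ≤ t / 16 * G ^ 2 + 4 * (e ^ 2 / t) := by
    have hsq : t / 16 * (G - 8 * e / t) ^ 2 = t / 16 * G ^ 2 + 4 * (e ^ 2 / t) - G * e := by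
      field_simp; ring
    linarith [show 0 ≤ t / 16 * (G - 8 * e / t) ^ 2 by positivity]
  calc f (x k) ≤ f (x n) - t / 2 * G ^ 2 + 2 * (t * L) * (t * G ^ 2) + (1 + 2 * (t * L)) * (G * e)
        + 4 * (t * L) * (t * G ^ 2 + e ^ 2 / t) := by linarith
    _ ≤ f (x n) - t / 2 * G ^ 2 + 2 * (1 / 48) * (t * G ^ 2)
        + (1 + 2 * (1 / 48)) * (t / 16 * G ^ 2 + 4 * (e ^ 2 / t))
        + 4 * (1 / 48) * (t * G ^ 2 + e ^ 2 / t) := by gcongr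
    _ ≤ f (x n) - t / 4 * G ^ 2 + 9 / t * e ^ 2 := by
        have hmul : 9 / t * e ^ 2 = 9 * (e ^ 2 / t) := by ring
        linarith [show 0 ≤ t * G ^ 2 by positivity, show 0 ≤ e ^ 2 / t by positivity]

lemma eventually_exists_apply_le (h : PerturbedGradientDescent f S L α x z)
    (hα : Tendsto α atTop (𝓝 0)) (hγ : Tendsto (elapsed α) atTop atTop) (hr : 0 ≤ r) (ht : 0 < t)
    (htL : t * L ≤ 1 / 48)
    (hB : ∀ᶠ n in atTop, ∀ j ≥ n, elapsed α j ≤ elapsed α n + t →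
      ‖∑ i ∈ Finset.Ico n j, scaledNoise α r z i‖ ≤ B) :
    ∀ᶠ n in atTop, ∃ k ≥ n, elapsed α k ≤ elapsed α n + t ∧
      f (x k) ≤ f (x n) - t / 4 * ‖gradient f (x n)‖ ^ 2
        + 9 / t * (elapsed α n ^ (-r) * B) ^ 2 := by
  have hmono := elapsed_monotone fun n => (h.step_pos n).le
  filter_upwards [eventually_exists_elapsed_sub_mem_Icc hα hγ ht, hγ.eventually_gt_atTop 0, hB]
    with n ⟨k, hnk, hk⟩ hγn hBn
  have hkt : elapsed α k ≤ elapsed α n + t := sub_le_iff_le_add'.1 hk.2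
  refine ⟨k, hnk, hkt, h.apply_le_sub_add hnk ht htL (sum_Ico_eq_elapsed_sub hnk ▸ hk) ?_⟩
  exact fun j hj => norm_sum_Ico_smul_le_rpow_neg_mul hj.1 hr hmono hγn fun i hi =>
    hBn i hi.1 ((hmono (hi.2.trans hj.2)).trans hkt)

lemma frequently_rpow_mul_sub_le {b c δ m p q s : ℝ} (h : PerturbedGradientDescent f S L α x z)
    (hα : Tendsto α atTop (𝓝 0)) (hγ : Tendsto (elapsed α) atTop atTop) (hr : 0 ≤ r) (ht : 0 < t)
    (htL : t * L ≤ 1 / 48)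
    (hB : ∀ᶠ n in atTop, ∀ j ≥ n, elapsed α j ≤ elapsed α n + t →
      ‖∑ i ∈ Finset.Ico n j, scaledNoise α r z i‖ ≤ B)
    (hm : 0 < m) (hδ : δ ≤ 1) (hs : 0 ≤ s) (hsq : s ≤ 1 + q)
    (hdom : ∀ᶠ n in atTop, |f (x n) - b| ≤ δ → m * |f (x n) - b| ^ s ≤ ‖gradient f (x n)‖ ^ 2)
    (hfreq : ∃ᶠ n in atTop, f (x n) - b ≤ δ) (hc : 0 < c) (hp : 0 ≤ p) (hq : 0 < q)
    (hnoise : p * s < 2 * r ∨ p * s ≤ 2 * r ∧ 9 / t * B ^ 2 ≤ t * (m / 8) * c ^ s)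
    (hdecay : p * q < 1 ∨ p * q = 1 ∧ c ^ (-q) < q * (m / 8)) :
    ∃ᶠ n in atTop, elapsed α n ^ p * (f (x n) - b) ≤ c := by
  refine frequently_rpow_mul_le_of_exists_decrease hc hp hq (by positivity : 0 < m / 8) ht hγ hfreq
    ?_ hdecay
  filter_upwards [h.eventually_exists_apply_le hα hγ hr ht htL hB, hdom,
    hγ.eventually_gt_atTop 0, hγ.eventually (eventually_mul_rpow_neg_sq_le
      (mul_pos ht (by positivity : 0 < m / 8)) hc hnoise)]
    with n ⟨k, hnk, hkt, hk⟩ hdomn hγn hnoisen hlow hupp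
  refine ⟨k, hnk, hkt, ?_⟩
  have hlow0 : 0 < c * elapsed α n ^ (-p) := by positivity
  set u := f (x n) - b with hu
  have hu0 : 0 < u := hlow0.trans hlow
  have hgrad : m * u ^ s ≤ ‖gradient f (x n)‖ ^ 2 := by
    simpa only [abs_of_pos hu0] using hdomn (by rwa [abs_of_pos hu0])
  have hpow : u ^ (1 + q) ≤ u ^ s := Real.rpow_le_rpow_of_exponent_ge hu0 (hupp.trans hδ) hsq
  have hnoise_le : 9 / t * (elapsed α n ^ (-r) * B) ^ 2 ≤ t * (m / 8) * u ^ s :=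
    hnoisen.trans (by gcongr)
  calc f (x k) - b
      ≤ u - t / 4 * ‖gradient f (x n)‖ ^ 2 + 9 / t * (elapsed α n ^ (-r) * B) ^ 2 := by
        rw [hu]; linarith
    _ ≤ u - t / 4 * (m * u ^ s) + t * (m / 8) * u ^ s := by gcongr
    _ = u - m / 8 * t * u ^ s := by ring
    _ ≤ u - m / 8 * t * u ^ (1 + q) := by gcongr

end PerturbedGradientDescent

/-- The Łojasiewicz inequality with exponent `μ` for `f` at the level `b`, required on the points
of `Q` where `f` is close to `b`. -/
def LojasiewiczOn {E : Type*} [NormedAddCommGroup E] [InnerProductSpace ℝ E] [CompleteSpace E]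
    (f : E → ℝ) (Q : Set E) (b μ : ℝ) : Prop :=
  ∃ δ > 0, ∃ M > 0, ∀ x ∈ Q, |f x - b| ≤ δ → |f x - b| ≤ M * ‖gradient f x‖ ^ μ

lemma LojasiewiczOn.exists_mul_rpow_le_sq {E : Type*} [NormedAddCommGroup E]
    [InnerProductSpace ℝ E] [CompleteSpace E] {f : E → ℝ} {Q : Set E} {b μ : ℝ}
    (h : LojasiewiczOn f Q b μ) (hμ : 0 < μ) :
    ∃ δ ∈ Set.Ioc (0 : ℝ) 1, ∃ m > 0, ∀ x ∈ Q, |f x - b| ≤ δ →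
      m * |f x - b| ^ (2 / μ) ≤ ‖gradient f x‖ ^ 2 := by
  obtain ⟨δ, hδ, M, hM, hLoj⟩ := h
  refine ⟨min δ 1, ⟨lt_min hδ one_pos, min_le_right _ _⟩, (M ^ (2 / μ))⁻¹, by positivity,
    fun x hx hxδ => ?_⟩
  rw [inv_mul_le_iff₀ (by positivity)]
  calc |f x - b| ^ (2 / μ) ≤ (M * ‖gradient f x‖ ^ μ) ^ (2 / μ) := by
        gcongr
        exact hLoj x hx (hxδ.trans (min_le_left _ _))
    _ = M ^ (2 / μ) * ‖gradient f x‖ ^ 2 := by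
        rw [Real.mul_rpow hM.le (by positivity), ← Real.rpow_mul (norm_nonneg _),
          mul_div_cancel₀ _ hμ.ne', Real.rpow_two]

/-- The convergence rate `p̂ = μ min {r, r̂}`, where `r̂ = 1 / (2 - μ)` is infinite for `μ = 2`. -/
noncomputable def rateExponent (r μ : ℝ) : ℝ := μ * (if μ < 2 then min r (1 / (2 - μ)) else r)

/-- The factor `φ(ξ)`: it is `ξ`, `1 + ξ` or `1` when `r < r̂`, `r = r̂` or `r̂ < r`, where
`r̂ = 1 / (2 - μ)` is infinite for `μ = 2`. -/
noncomputable def noiseFactor (r μ ξ : ℝ) : ℝ :=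
  if μ = 2 ∨ r < 1 / (2 - μ) then ξ else if r = 1 / (2 - μ) then 1 + ξ else 1

section Exponents

variable {r μ ξ : ℝ}

lemma noiseFactor_nonneg (hξ : 0 ≤ ξ) : 0 ≤ noiseFactor r μ ξ := by
  unfold noiseFactor
  split_ifs <;> positivity

lemma rateExponent_pos (hr : 0 < r) (hμ : 0 < μ) : 0 < rateExponent r μ := by
  unfold rateExponent
  split_ifs with hμ2
  · exact mul_pos hμ (lt_min hr (one_div_pos.2 (sub_pos.2 hμ2)))
  · exact mul_pos hμ hr

lemma exists_rateExponent_mul_le_one (hr : 0 < r) (hμ : μ ∈ Set.Ioc 0 2) :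
    ∃ q > 0, 2 / μ ≤ 1 + q ∧ (rateExponent r μ * q < 1 ∨
      rateExponent r μ * q = 1 ∧ ∀ ξ ≥ 0, 1 ≤ noiseFactor r μ ξ) := by
  obtain ⟨hμ0, hμ2⟩ := hμ
  rcases hμ2.lt_or_eq with hμ2 | rfl
  · have hd : 0 < 2 - μ := sub_pos.2 hμ2
    refine ⟨(2 - μ) / μ, by positivity, le_of_eq (by field_simp; ring), ?_⟩
    have hrate : rateExponent r μ * ((2 - μ) / μ) = min r (1 / (2 - μ)) * (2 - μ) := by
      rw [rateExponent, if_pos hμ2]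
      field_simp
    rw [hrate]
    rcases lt_or_ge r (1 / (2 - μ)) with hlt | hge
    · exact .inl (by rwa [min_eq_left hlt.le, ← lt_div_iff₀ hd])
    · refine .inr ⟨by rw [min_eq_right hge, one_div_mul_cancel hd.ne'], fun ξ hξ => ?_⟩
      rw [noiseFactor, if_neg (not_or.2 ⟨hμ2.ne, hge.not_gt⟩)]
      split_ifs <;> linarith
  · have hrate := rateExponent_pos hr two_pos
    have hq : 0 < 1 / (2 * rateExponent r 2) := by positivity
    refine ⟨_, hq, by linarith, .inl ?_⟩
    field_simp
    norm_num

lemma rateExponent_mul_two_div_le (hμ : μ ∈ Set.Ioc 0 2) :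
    rateExponent r μ * (2 / μ) < 2 * r ∨
      rateExponent r μ * (2 / μ) ≤ 2 * r ∧ ∀ ξ, ξ ≤ noiseFactor r μ ξ := by
  obtain ⟨hμ0, hμ2⟩ := hμ
  have hrate : rateExponent r μ * (2 / μ) = 2 * (if μ < 2 then min r (1 / (2 - μ)) else r) := by
    rw [rateExponent]
    field_simp
  rw [hrate, mul_le_mul_iff_right₀ two_pos, mul_lt_mul_iff_right₀ two_pos]
  rcases hμ2.lt_or_eq with hμ2 | rfl
  · rw [if_pos hμ2]
    rcases lt_or_ge (1 / (2 - μ)) r with hlt | hge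
    · exact .inl (min_lt_of_right_lt hlt)
    · refine .inr ⟨min_le_left _ _, fun ξ => ?_⟩
      rw [noiseFactor]
      split_ifs with h₁ h₂
      · exact le_rfl
      · linarith
      · exact absurd (hge.lt_of_ne h₂) fun h => h₁ (.inr h)
  · exact .inr (by simp [noiseFactor])

end Exponents

/-- The index `a(n, t) = max {k ≥ n : γ k - γ n ≤ t}`, which is `0` if these `k` are unbounded. -/
noncomputable def windowEnd (γ : ℕ → ℝ) (n : ℕ) (t : ℝ) : ℕ := sSup {k | n ≤ k ∧ γ k - γ n ≤ t}

/-- The largest `‖y n + ⋯ + y k‖` over the window `n ≤ k < a(n, T)`. In the iterated supremum the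
indices `k` outside the window contribute `0`. -/
noncomputable def windowNoise {E : Type*} [NormedAddCommGroup E] (γ : ℕ → ℝ) (T : ℝ) (y : ℕ → E)
    (n : ℕ) : ℝ :=
  ⨆ k ∈ Set.Ico n (windowEnd γ n T), ‖∑ i ∈ Finset.Icc n k, y i‖

section WindowNoise

variable {E : Type*} [NormedAddCommGroup E] {γ : ℕ → ℝ} {T B : ℝ} {y : ℕ → E} {n k : ℕ}

lemma le_windowEnd (hγ : Tendsto γ atTop atTop) (hnk : n ≤ k) (hk : γ k ≤ γ n + T) :
    k ≤ windowEnd γ n T := by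
  obtain ⟨N, hN⟩ := eventually_atTop.1 (hγ.eventually_gt_atTop (γ n + T))
  refine le_csSup ⟨N, fun j hj => ?_⟩ ⟨hnk, sub_le_iff_le_add'.2 hk⟩
  by_contra! hNj
  exact (hN j hNj.le).not_ge (sub_le_iff_le_add'.1 hj.2)

lemma windowNoise_nonneg : 0 ≤ windowNoise γ T y n :=
  Real.iSup_nonneg fun _ => Real.iSup_nonneg fun _ => norm_nonneg _

lemma norm_sum_Ico_le_windowNoise (hγ : Tendsto γ atTop atTop) (hnk : n ≤ k)
    (hk : γ k ≤ γ n + T) : ‖∑ i ∈ Finset.Ico n k, y i‖ ≤ windowNoise γ T y n := by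
  rcases hnk.eq_or_lt with rfl | hlt
  · simpa using windowNoise_nonneg
  obtain ⟨j, rfl⟩ : ∃ j, k = j + 1 := ⟨k - 1, by lia⟩
  have hj : j ∈ Set.Ico n (windowEnd γ n T) := ⟨by lia, le_windowEnd hγ hnk hk⟩
  have hfinite := (Set.finite_Ico n (windowEnd γ n T)).image fun k => ‖∑ i ∈ Finset.Icc n k, y i‖
  rw [Finset.Ico_add_one_right_eq_Icc]
  refine le_ciSup₂ (f := fun k _ => ‖∑ i ∈ Finset.Icc n k, y i‖) (hfinite.bddAbove.mono ?_) j hj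
  exact Set.iUnion_subset fun k => Set.range_subset_iff.2 fun hk => Set.mem_image_of_mem _ hk

lemma eventually_norm_sum_Ico_le (hγ : Tendsto γ atTop atTop)
    (hbdd : IsBoundedUnder (· ≤ ·) atTop (windowNoise γ T y))
    (hB : limsup (windowNoise γ T y) atTop < B) :
    ∀ᶠ n in atTop, ∀ k ≥ n, γ k ≤ γ n + T → ‖∑ i ∈ Finset.Ico n k, y i‖ ≤ B := by
  filter_upwards [eventually_lt_of_limsup_lt hB hbdd] with n hn k hnk hk
  exact (norm_sum_Ico_le_windowNoise hγ hnk hk).trans hn.le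

lemma limsup_windowNoise_nonneg (hbdd : IsBoundedUnder (· ≤ ·) atTop (windowNoise γ T y)) :
    0 ≤ limsup (windowNoise γ T y) atTop :=
  le_limsup_of_frequently_le (Frequently.of_forall fun _ => windowNoise_nonneg) hbdd

end WindowNoise

section ClusterPoints

variable {X : Type*} [PseudoMetricSpace X] {x : ℕ → X} {Q : Set X} {δ : X → ℝ}

lemma mapClusterPt_liminf_of_isCompact {u : ℕ → ℝ} {K : Set ℝ} (hK : IsCompact K)
    (hu : ∀ᶠ n in atTop, u n ∈ K) : MapClusterPt (liminf u atTop) atTop u :=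
  have himage : u '' (u ⁻¹' K) ⊆ K := Set.image_preimage_subset u K
  .liminf ((hK.bddAbove.mono himage).isBoundedUnder hu).isCoboundedUnder_ge
    ((hK.bddBelow.mono himage).isBoundedUnder hu)

/-- The set `Q̂ = cl ⋃_y {w : ‖w - y‖ ≤ δ_y / 2}`, the union being over the accumulation points
`y` of the sequence `x`. -/
def clusterNhd (δ : X → ℝ) (x : ℕ → X) : Set X :=
  closure (⋃ y ∈ {y | MapClusterPt y atTop x}, Metric.closedBall y (δ y / 2))

lemma clusterNhd_mem_nhds {y : X} (hy : MapClusterPt y atTop x) (hδ : 0 < δ y) :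
    clusterNhd δ x ∈ 𝓝 y :=
  mem_of_superset (Metric.closedBall_mem_nhds y (half_pos hδ))
    ((Set.subset_biUnion_of_mem (u := fun y => Metric.closedBall y (δ y / 2)) hy).trans
      subset_closure)

variable [ProperSpace X]

lemma isCompact_clusterNhd (hx : Bornology.IsBounded (Set.range x)) (hδ : BddAbove (Set.range δ)) :
    IsCompact (clusterNhd δ x) := by
  obtain ⟨C, hC⟩ := hδ
  have hcluster : {y | MapClusterPt y atTop x} ⊆ closure (Set.range x) := fun y hy =>
    isClosed_closure.mem_of_mapClusterPt hy (.of_forall fun n => subset_closure ⟨n, rfl⟩)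
  refine ((hx.closure.subset hcluster).cthickening (δ := C / 2)).subset
    (Set.iUnion₂_subset fun y hy => ?_) |>.isCompact_closure
  calc Metric.closedBall y (δ y / 2) ⊆ Metric.closedBall y (C / 2) :=
        Metric.closedBall_subset_closedBall (by linarith [hC ⟨y, rfl⟩])
    _ ⊆ Metric.cthickening (C / 2) {y | MapClusterPt y atTop x} :=
        Metric.closedBall_subset_cthickening hy _

lemma eventually_mem_of_forall_mapClusterPt (hx : Bornology.IsBounded (Set.range x))
    (hQ : ∀ y, MapClusterPt y atTop x → Q ∈ 𝓝 y) : ∀ᶠ n in atTop, x n ∈ Q := by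
  have hlim : Tendsto x atTop (𝓝ˢ {y | MapClusterPt y atTop x}) :=
    hx.isCompact_closure.tendsto_nhdsSet_of_mapClusterPt
      (.of_forall fun n => subset_closure ⟨n, rfl⟩) fun _ _ hy => hy
  exact hlim (mem_nhdsSet_iff_forall.2 hQ)

end ClusterPoints

lemma mul_sq_le_mul_rpow_two_div {κ a C c μ ξ v : ℝ} (ha : 0 ≤ a) (hC : 0 ≤ C) (hμ : 0 < μ)
    (hκC : κ ≤ a * C ^ (2 / μ)) (hξ : 0 ≤ ξ) (hξv : ξ ≤ v) (hc : C * v ^ μ ≤ c) :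
    κ * ξ ^ 2 ≤ a * c ^ (2 / μ) := by
  have hv : 0 ≤ v := hξ.trans hξv
  calc κ * ξ ^ 2 ≤ a * C ^ (2 / μ) * v ^ 2 := by gcongr
    _ = a * (C * v ^ μ) ^ (2 / μ) := by
        rw [Real.mul_rpow hC (by positivity), ← Real.rpow_mul hv, mul_div_cancel₀ _ hμ.ne',
          Real.rpow_two, mul_assoc]
    _ ≤ a * c ^ (2 / μ) := by gcongr

lemma exists_pos_and_le_and_mul_le {T L ε : ℝ} (hT : 0 < T) (hL : 0 ≤ L) (hε : 0 < ε) :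
    ∃ t > 0, t ≤ T ∧ t * L ≤ ε := by
  refine ⟨min T (ε / (L + 1)), by positivity, min_le_left _ _, ?_⟩
  calc min T (ε / (L + 1)) * L ≤ ε / (L + 1) * (L + 1) := by
        gcongr
        · exact min_le_right _ _
        · linarith
    _ = ε := by field_simp

theorem PerturbedGradientDescent.exists_forall_frequently_rpow_mul_sub_le {E : Type*}
    [NormedAddCommGroup E] [InnerProductSpace ℝ E] [CompleteSpace E] {f : E → ℝ} {S Q : Set E}
    {L : ℝ≥0} {α : ℕ → ℝ} {x z : ℕ → E} {b r T μ : ℝ} (h : PerturbedGradientDescent f S L α x z)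
    (hα : Tendsto α atTop (𝓝 0)) (hγ : Tendsto (elapsed α) atTop atTop) (hr : 0 < r) (hT : 0 < T)
    (hbdd : IsBoundedUnder (· ≤ ·) atTop
      (windowNoise (elapsed α) T (scaledNoise α r z)))
    (hμ : μ ∈ Set.Ioc 0 2) (hLoj : LojasiewiczOn f Q b μ) (hxQ : ∀ᶠ n in atTop, x n ∈ Q)
    (hb : MapClusterPt b atTop fun n => f (x n)) :
    ∃ C, 1 ≤ C ∧ ∀ ε > 0, ∀ c, C * (noiseFactor r μ (limsup (windowNoise (elapsed α) T
        (scaledNoise α r z)) atTop) + ε) ^ μ < c →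
      ∃ᶠ n in atTop, elapsed α n ^ rateExponent r μ * (f (x n) - b) ≤ c := by
  obtain ⟨δ, ⟨hδ0, hδ1⟩, m, hm, hdom⟩ := hLoj.exists_mul_rpow_le_sq hμ.1
  obtain ⟨q, hq, hμq, hdecay⟩ := exists_rateExponent_mul_le_one hr hμ
  obtain ⟨t, ht, htT, htL⟩ :=
    exists_pos_and_le_and_mul_le hT L.coe_nonneg (by norm_num : (0 : ℝ) < 1 / 48)
  have hfreq : ∃ᶠ n in atTop, f (x n) - b ≤ δ :=
    (hb.frequently (Iic_mem_nhds (lt_add_of_pos_right b hδ0))).mono fun n hn =>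
      sub_le_iff_le_add'.2 hn
  obtain ⟨C, hC1, hCnoise, hCdecay⟩ := exists_one_le_and_le_mul_rpow_and_rpow_neg_lt (K := 9 / t)
    (by positivity : 0 < t * (m / 8)) (by positivity : 0 < q * (m / 8)) (div_pos two_pos hμ.1) hq
  refine ⟨C, hC1, fun ε hε c hc => ?_⟩
  set Ξ := limsup (windowNoise (elapsed α) T (scaledNoise α r z)) atTop
  have hΞ : 0 ≤ Ξ := limsup_windowNoise_nonneg hbdd
  have hφ : 0 ≤ noiseFactor r μ Ξ := noiseFactor_nonneg hΞ
  have hc0 : 0 < c := by refine lt_of_le_of_lt ?_ hc; positivity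
  have hB : ∀ᶠ n in atTop, ∀ j ≥ n, elapsed α j ≤ elapsed α n + t →
      ‖∑ i ∈ Finset.Ico n j, scaledNoise α r z i‖ ≤ Ξ + ε :=
    (eventually_norm_sum_Ico_le hγ hbdd (lt_add_of_pos_right Ξ hε)).mono fun n hn j hj hjt =>
      hn j hj (by linarith)
  refine h.frequently_rpow_mul_sub_le hα hγ hr.le ht htL hB hm hδ1 (div_pos two_pos hμ.1).le hμq
    (hxQ.mono fun n hn => hdom _ hn) hfreq hc0 (rateExponent_pos hr hμ.1).le hq ?_ ?_
  · refine (rateExponent_mul_two_div_le hμ).imp_right fun hle => ⟨hle.1, ?_⟩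
    exact mul_sq_le_mul_rpow_two_div (by positivity) (by positivity) hμ.1 hCnoise
      (by positivity) (add_le_add_left (hle.2 Ξ) ε) hc.le
  · refine hdecay.imp_right fun heq => ⟨heq.1, lt_of_le_of_lt ?_ hCdecay⟩
    have hCc : C ≤ c := (le_mul_of_one_le_right (by positivity)
      (Real.one_le_rpow (by linarith [heq.2 Ξ hΞ]) hμ.1.le)).trans hc.le
    exact Real.rpow_le_rpow_of_nonpos (by positivity) hCc (neg_nonpos.2 hq.le)

section Bounded

variable {E : Type*} [NormedAddCommGroup E] [InnerProductSpace ℝ E] [ProperSpace E]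
  {f : E → ℝ} {α : ℕ → ℝ} {r T : ℝ}

lemma exists_perturbedGradientDescent_of_isBounded {x z : ℕ → E} (hf : Differentiable ℝ f)
    (hlip : LocallyLipschitz fun y => gradient f y) (hα : ∀ n, 0 < α n)
    (hx : Bornology.IsBounded (Set.range x))
    (hsucc : ∀ n, x (n + 1) = x n - α n • (gradient f (x n) + z n)) :
    ∃ S L, IsCompact S ∧ PerturbedGradientDescent f S L α x z := by
  obtain ⟨C, hC⟩ := hx.subset_closedBall 0
  have hS := isCompact_closedBall (0 : E) C
  obtain ⟨L, hL⟩ := hlip.locallyLipschitzOn.exists_lipschitzOnWith_of_compact hS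
  exact ⟨_, L, hS, convex_closedBall 0 C, fun y _ => hf y, hL, hα,
    Set.range_subset_iff.1 hC, hsucc⟩

theorem exists_forall_frequently_rpow_mul_sub_liminf_le {x z : ℕ → E} {Q : Set E} {μ : ℝ}
    (hf : Differentiable ℝ f) (hlip : LocallyLipschitz fun y => gradient f y)
    (hα : ∀ n, 0 < α n) (hα0 : Tendsto α atTop (𝓝 0)) (hγ : Tendsto (elapsed α) atTop atTop)
    (hx : Bornology.IsBounded (Set.range x))
    (hsucc : ∀ n, x (n + 1) = x n - α n • (gradient f (x n) + z n)) (hr : 0 < r) (hT : 0 < T)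
    (hbdd : IsBoundedUnder (· ≤ ·) atTop (windowNoise (elapsed α) T (scaledNoise α r z)))
    (hQ : ∀ y, MapClusterPt y atTop x → Q ∈ 𝓝 y) (hμ : μ ∈ Set.Ioc 0 2)
    (hLoj : LojasiewiczOn f Q (liminf (fun n => f (x n)) atTop) μ) :
    ∃ C, 1 ≤ C ∧ ∀ ε > 0, ∀ c, C * (noiseFactor r μ (limsup (windowNoise (elapsed α) T
        (scaledNoise α r z)) atTop) + ε) ^ μ < c →
      ∃ᶠ n in atTop,
        elapsed α n ^ rateExponent r μ * (f (x n) - liminf (fun n => f (x n)) atTop) ≤ c := by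
  obtain ⟨S, L, hS, hdesc⟩ := exists_perturbedGradientDescent_of_isBounded hf hlip hα hx hsucc
  have hlevel : MapClusterPt (liminf (fun n => f (x n)) atTop) atTop fun n => f (x n) :=
    mapClusterPt_liminf_of_isCompact (hS.image hf.continuous)
      (.of_forall fun n => Set.mem_image_of_mem f (hdesc.mem n))
  exact hdesc.exists_forall_frequently_rpow_mul_sub_le hα0 hγ hr hT hbdd hμ hLoj
    (eventually_mem_of_forall_mapClusterPt hx hQ) hlevel

theorem stochastic_gradient_liminf_bound_general {Ω : Type*} [MeasurableSpace Ω] {P : Measure Ω}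
    {θ ξ : ℕ → Ω → E} {δ : E → ℝ} {μQ : Set E → ℝ → ℝ} {fhat μhat Xi : Ω → ℝ}
    (hf : Differentiable ℝ f) (hlip : LocallyLipschitz fun y => gradient f y)
    (hα : ∀ n, 0 < α n) (hα0 : Tendsto α atTop (𝓝 0)) (hγ : Tendsto (elapsed α) atTop atTop)
    (hrec : ∀ n ω, θ (n + 1) ω = θ n ω - α n • (gradient f (θ n ω) + ξ n ω))
    (hr : 0 < r) (hT : 0 < T)
    (hnoise : ∀ᵐ ω ∂P, (∃ C, ∀ n, ‖θ n ω‖ ≤ C) → IsBoundedUnder (· ≤ ·) atTop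
      (windowNoise (elapsed α) T (scaledNoise α r fun n => ξ n ω)))
    (hXi : ∀ ω, Xi ω = limsup (windowNoise (elapsed α) T (scaledNoise α r fun n => ξ n ω)) atTop)
    (hLoj : ∀ Q, IsCompact Q → ∀ b ∈ f '' Q,
      μQ Q b ∈ Set.Ioc 0 2 ∧ LojasiewiczOn f Q b (μQ Q b))
    (hδ : ∀ y, 0 < δ y) (hδ_bdd : BddAbove (Set.range δ))
    (hfhat : ∀ ω, fhat ω = liminf (fun n => f (θ n ω)) atTop)
    (hμhat : ∀ ω, μhat ω = μQ (clusterNhd δ fun n => θ n ω) (fhat ω)) :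
    ∃ C : Ω → ℝ, (∀ ω, 1 ≤ C ω) ∧ ∀ᵐ ω ∂P, (∃ C, ∀ n, ‖θ n ω‖ ≤ C) → ∀ ε > 0, ∀ c,
      C ω * (noiseFactor r (μhat ω) (Xi ω) + ε) ^ μhat ω < c →
        ∃ᶠ n in atTop, elapsed α n ^ rateExponent r (μhat ω) * (f (θ n ω) - fhat ω) ≤ c := by
  suffices h : ∀ᵐ ω ∂P, ∃ C : Set.Ici (1 : ℝ), (∃ C, ∀ n, ‖θ n ω‖ ≤ C) → ∀ ε > 0, ∀ c,
      C * (noiseFactor r (μhat ω) (Xi ω) + ε) ^ μhat ω < c →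
        ∃ᶠ n in atTop, elapsed α n ^ rateExponent r (μhat ω) * (f (θ n ω) - fhat ω) ≤ c by
    obtain ⟨C, hC⟩ := skolem.1 h
    exact ⟨fun ω => C ω, fun ω => (C ω).2, hC⟩
  filter_upwards [hnoise] with ω hω
  by_cases hbdd : ∃ C, ∀ n, ‖θ n ω‖ ≤ C
  · have hθ : Bornology.IsBounded (Set.range fun n => θ n ω) :=
      isBounded_iff_forall_norm_le.2 (hbdd.imp fun _ => Set.forall_mem_range.2)
    have hQ : ∀ y, MapClusterPt y atTop (fun n => θ n ω) → clusterNhd δ (fun n => θ n ω) ∈ 𝓝 y :=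
      fun y hy => clusterNhd_mem_nhds hy (hδ y)
    have hQ_compact := isCompact_clusterNhd hθ hδ_bdd
    have hlevel : liminf (fun n => f (θ n ω)) atTop ∈ f '' clusterNhd δ fun n => θ n ω := by
      have himage := hQ_compact.image hf.continuous
      have hmem := (eventually_mem_of_forall_mapClusterPt hθ hQ).mono
        fun n hn => Set.mem_image_of_mem f hn
      exact himage.isClosed.mem_of_mapClusterPt (mapClusterPt_liminf_of_isCompact himage hmem) hmem
    obtain ⟨hμ, hLojω⟩ := hLoj _ hQ_compact _ hlevel
    obtain ⟨C, hC, h⟩ := exists_forall_frequently_rpow_mul_sub_liminf_le hf hlip hα hα0 hγ hθ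
      (hrec · ω) hr hT (hω hbdd) hQ hμ hLojω
    rw [hXi, hμhat, hfhat]
    exact ⟨⟨C, hC⟩, fun _ => h⟩
  · exact ⟨⟨1, Set.self_mem_Ici⟩, fun h => absurd h hbdd⟩

end Bounded

/-- Lemma 1.6 of the paper: under Assumptions 1.1, 1.2, 1.3
there is a random variable `Ĉ₆ ∈ [1,∞)` such that, almost surely on `Λ`, for
every `ε > 0`: `liminf_n γ_n^p̂ u(θ_n) ≤ Ĉ₆ (φ_ε(ξ))^μ̂`.
(`liminf u ≤ c` is expressed as: for every `c' > c`, `u n ≤ c'` frequently.) -/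
theorem stochastic_gradient_liminf_bound
    {d : ℕ} (hd : 1 ≤ d)
    {Ω : Type} [MeasurableSpace Ω] (P : Measure Ω) [IsProbabilityMeasure P]
    (f : EuclideanSpace ℝ (Fin d) → ℝ)
    (hfd : Differentiable ℝ f)
    (hlip : LocallyLipschitz (fun x => gradient f x))
    (α : ℕ → ℝ) (hαpos : ∀ n, 0 < α n)
    (θ ξ : ℕ → Ω → EuclideanSpace ℝ (Fin d))
    (hrec : ∀ n ω, θ (n + 1) ω = θ n ω - α n • (gradient f (θ n ω) + ξ n ω))
    -- Assumption 1.1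
    (hα0 : Tendsto α atTop (nhds 0))
    (γ : ℕ → ℝ) (hγ : ∀ n, γ n = ∑ i ∈ Finset.range n, α i)
    (hαdiv : Tendsto γ atTop atTop)
    -- the interpolation index `a(n,t)`
    (a : ℕ → ℝ → ℕ)
    (ha : ∀ n t, 0 < t → a n t = sSup {k | n ≤ k ∧ γ k - γ n ≤ t})
    -- the event Λ
    (Λ : Set Ω) (hΛ : Λ = {ω | ∃ C, ∀ n, ‖θ n ω‖ ≤ C})
    -- Assumption 1.2
    (r : ℝ) (hr : 1 < r)
    (noise : ℕ → Ω → ℝ)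
    (hnoise : ∀ n ω, noise n ω =
      ⨆ k ∈ Set.Ico n (a n 1), ‖∑ i ∈ Finset.Icc n k, (α i * γ i ^ r) • ξ i ω‖)
    (hA12 : ∀ᵐ ω ∂P, ω ∈ Λ → IsBoundedUnder (· ≤ ·) atTop (fun n => noise n ω))
    (Xi : Ω → ℝ) (hXi : ∀ ω, Xi ω = Filter.limsup (fun n => noise n ω) atTop)
    -- Assumption 1.3 (Łojasiewicz-type gradient inequality, with a choice
    -- `δ_{Q,a}, μ_{Q,a}, M_{Q,a}` of the Łojasiewicz data for each compact `Q`
    -- and each value `a ∈ f(Q)`)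
    (δQ μQ MQ : Set (EuclideanSpace ℝ (Fin d)) → ℝ → ℝ)
    (hLoj : ∀ Q : Set (EuclideanSpace ℝ (Fin d)), IsCompact Q → ∀ b ∈ f '' Q,
      δQ Q b ∈ Set.Ioc (0 : ℝ) 1 ∧ μQ Q b ∈ Set.Ioc (1 : ℝ) 2 ∧ 1 ≤ MQ Q b ∧
      ∀ x ∈ Q, |f x - b| ≤ δQ Q b → |f x - b| ≤ MQ Q b * ‖gradient f x‖ ^ μQ Q b)
    -- the local Łojasiewicz data `δ_θ, μ_θ, M_θ` provided by Assumption 1.3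
    (δl μl Ml : EuclideanSpace ℝ (Fin d) → ℝ)
    (hδl : ∀ x, δl x ∈ Set.Ioc (0 : ℝ) 1)
    (hμl : ∀ x, μl x ∈ Set.Ioc (1 : ℝ) 2)
    (hMl : ∀ x, 1 ≤ Ml x)
    (hLocal : ∀ x y, ‖y - x‖ ≤ δl x → |f y - f x| ≤ Ml x * ‖gradient f y‖ ^ μl x)
    -- `f̂ = liminf_n f(θ_n)`
    (fhat : Ω → ℝ)
    (hfhat : ∀ ω, fhat ω = Filter.liminf (fun n => f (θ n ω)) atTop)
    -- `Â` = set of accumulation points of `{θ_n}`, and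
    -- `Q̂ = cl(⋃_{θ ∈ Â} {θ' : ‖θ' − θ‖ ≤ δ_θ/2})`
    (Ahat : Ω → Set (EuclideanSpace ℝ (Fin d)))
    (hAhat : ∀ ω, Ahat ω = {x | MapClusterPt x atTop (fun n => θ n ω)})
    (Qhat : Ω → Set (EuclideanSpace ℝ (Fin d)))
    (hQhat : ∀ ω, Qhat ω = closure (⋃ x ∈ Ahat ω, Metric.closedBall x (δl x / 2)))
    -- `μ̂ = μ_{Q̂,f̂}`, `r̂ = 1/(2−μ̂)` (`= ∞` if `μ̂ = 2`), `p̂ = μ̂ min{r,r̂}`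
    (μhat : Ω → ℝ) (hμhat : ∀ ω, μhat ω = μQ (Qhat ω) (fhat ω))
    (phat : Ω → ℝ)
    (hphat : ∀ ω, phat ω =
      μhat ω * (if μhat ω < 2 then min r (1 / (2 - μhat ω)) else r))
    -- `φ_ε(ξ) = φ(ξ) + ε` where `φ(ξ) = ξ` if `r < r̂`, `1 + ξ` if `r = r̂`,
    -- and `1` if `r > r̂`
    (φe : Ω → ℝ → ℝ)
    (hφe : ∀ ω ε, φe ω ε =
      (if μhat ω = 2 ∨ r < 1 / (2 - μhat ω) then Xi ω
        else if r = 1 / (2 - μhat ω) then 1 + Xi ω else 1) + ε) :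
    ∃ C₆ : Ω → ℝ, (∀ ω, 1 ≤ C₆ ω) ∧
      ∀ᵐ ω ∂P, ω ∈ Λ → ∀ ε : ℝ, 0 < ε →
        ∀ c : ℝ, C₆ ω * φe ω ε ^ μhat ω < c →
          ∃ᶠ n in atTop, γ n ^ phat ω * (f (θ n ω) - fhat ω) ≤ c := by
  obtain rfl : γ = elapsed α := funext hγ
  subst hΛ
  simp only [hnoise, ha _ 1 one_pos] at hA12 hXi
  simp only [hphat, hφe]
  exact stochastic_gradient_liminf_bound_general hfd hlip hαpos hα0 hαdiv hrec
    (one_pos.trans hr) one_pos hA12 hXi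
    (fun Q hQ b hb => have ⟨hδ, hμ, hM, hineq⟩ := hLoj Q hQ b hb
      ⟨⟨one_pos.trans hμ.1, hμ.2⟩, δQ Q b, hδ.1, MQ Q b, one_pos.trans_le hM, hineq⟩)
    (fun y => (hδl y).1) ⟨1, Set.forall_mem_range.2 fun y => (hδl y).2⟩ hfhat
    (fun ω => by rw [hμhat, hQhat, hAhat]; rfl)
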